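/- arXiv:1110.5071 — 3 statements merged into one kernel-verified Lean document; each statement's English description precedes it below -/
import Mathlib

section
/- Let I ⊂ ℝ be an interval, let a, φ : I → ℝ and α, μ : I → (0,∞) be C¹ functions, write g(t) = (a(t), α(t), φ(t), μ(t)), and let u : ℝ → ℂ be a C¹ function. Then for all t ∈ I and x ∈ ℝ, ∂_t[(g(t)·u)(x)] = (g(t)·(Y(t)u))(x), where Y(t)u := a′(t)μ(t) (e₁·u) + (α′(t)/α(t)) (e₂·u) + φ′(t) (e₃·u) + (μ′(t)/μ(t)) (e₄·u). -/
open MeasureTheory Filter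

noncomputable section

/-- `e₁·u = -u'` -/
def e1 (u : ℝ → ℂ) : ℝ → ℂ := fun x => -deriv u x
/-- `e₂·u = u` -/
def e2 (u : ℝ → ℂ) : ℝ → ℂ := u
/-- `e₃·u = iu` -/
def e3 (u : ℝ → ℂ) : ℝ → ℂ := fun x => Complex.I * u x
/-- `e₄·u = (xu)'` -/
def e4 (u : ℝ → ℂ) : ℝ → ℂ := fun x => deriv (fun y : ℝ => (y : ℂ) * u y) x

/-- The group action `(g·u)(x) = e^{iφ} α μ u(μ(x-a))`. -/
def gact (a α φ μ : ℝ) (u : ℝ → ℂ) : ℝ → ℂ :=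
  fun x => Complex.exp (Complex.I * φ) * α * μ * u (μ * (x - a))

/-!
Writing `y = μ (x - a)`, the amplitude `e^{iφ} α μ` of `g·u` has logarithmic derivative
`iφ' + α'/α + μ'/μ`, while `y' = (μ'/μ) y - a' μ`. Differentiating `(g·u)(x) = e^{iφ} α μ u(y)`
therefore produces `e^{iφ} α μ` times `(iφ' + α'/α + μ'/μ) u(y) + ((μ'/μ) y - a' μ) u'(y)`.
Since `e₄·u = u + y u'`, the two terms carrying `μ'/μ` combine to `(μ'/μ) e₄·u`, and the bracket
is `(Y u)(y)`.
-/

/-- The action on functions of the Lie algebra element `c₁e₁ + c₂e₂ + c₃e₃ + c₄e₄`. The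
`Y(t)` of the theorem has coordinates `(c₁, c₂, c₃, c₄) = (a'μ, α'/α, φ', μ'/μ)`. -/
def lieAct (c₁ c₂ c₃ c₄ : ℝ) (u : ℝ → ℂ) : ℝ → ℂ :=
  fun y => (c₁ : ℂ) * e1 u y + (c₂ : ℂ) * e2 u y + (c₃ : ℂ) * e3 u y + (c₄ : ℂ) * e4 u y

lemma e4_apply_of_differentiableAt {u : ℝ → ℂ} {y : ℝ} (hu : DifferentiableAt ℝ u y) :
    e4 u y = u y + y * deriv u y := by
  have hprod : HasDerivAt (fun z : ℝ => (z : ℂ) * u z) (1 * u y + y * deriv u y) y :=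
    (hasDerivAt_id y).ofReal_comp.mul hu.hasDerivAt
  rw [one_mul] at hprod
  exact hprod.deriv

lemma lieAct_apply_of_differentiableAt (c₁ c₂ c₃ c₄ : ℝ) {u : ℝ → ℂ} {y : ℝ}
    (hu : DifferentiableAt ℝ u y) :
    lieAct c₁ c₂ c₃ c₄ u y =
      (Complex.I * c₃ + c₂ + c₄) * u y + ((c₄ * y - c₁ : ℝ) : ℂ) * deriv u y := by
  simp only [lieAct, e1, e2, e3, e4_apply_of_differentiableAt hu]
  push_cast
  ring

section ParameterDerivative

variable {𝕜 : Type*} [NontriviallyNormedField 𝕜] {s : Set 𝕜} {t : 𝕜}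

lemma hasDerivWithinAt_cexp_mul_mul [NormedAlgebra 𝕜 ℂ] {α φ μ : 𝕜 → ℂ} {α' φ' μ' : ℂ}
    (hα : HasDerivWithinAt α α' s t) (hφ : HasDerivWithinAt φ φ' s t)
    (hμ : HasDerivWithinAt μ μ' s t) (hα₀ : α t ≠ 0) (hμ₀ : μ t ≠ 0) :
    HasDerivWithinAt (fun r => Complex.exp (Complex.I * φ r) * α r * μ r)
      (Complex.exp (Complex.I * φ t) * α t * μ t
        * (Complex.I * φ' + α' / α t + μ' / μ t)) s t := by
  refine (((hφ.const_mul Complex.I).cexp.mul hα).mul hμ).congr_deriv ?_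
  simp only [Pi.mul_apply]
  field_simp

lemma hasDerivWithinAt_comp_mul_const_sub {F : Type*} [NormedAddCommGroup F] [NormedSpace 𝕜 F]
    {u : 𝕜 → F} {u' : F} {a μ : 𝕜 → 𝕜} {a' μ' x : 𝕜}
    (hu : HasDerivAt u u' (μ t * (x - a t)))
    (ha : HasDerivWithinAt a a' s t) (hμ : HasDerivWithinAt μ μ' s t) :
    HasDerivWithinAt (fun r => u (μ r * (x - a r))) ((μ' * (x - a t) - a' * μ t) • u') s t := by
  have harg : HasDerivWithinAt (fun r => μ r * (x - a r)) (μ' * (x - a t) - a' * μ t) s t :=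
    (hμ.mul (ha.const_sub x)).congr_deriv (by ring)
  exact hu.scomp_hasDerivWithinAt t harg

end ParameterDerivative

theorem statement4_general {s : Set ℝ} {t x : ℝ} {a α φ μ : ℝ → ℝ} {a' α' φ' μ' : ℝ}
    (ha : HasDerivWithinAt a a' s t) (hα : HasDerivWithinAt α α' s t)
    (hφ : HasDerivWithinAt φ φ' s t) (hμ : HasDerivWithinAt μ μ' s t)
    (hα₀ : α t ≠ 0) (hμ₀ : μ t ≠ 0)
    {u : ℝ → ℂ} (hu : DifferentiableAt ℝ u (μ t * (x - a t))) :
    HasDerivWithinAt (fun r => gact (a r) (α r) (φ r) (μ r) u x)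
      (gact (a t) (α t) (φ t) (μ t) (lieAct (a' * μ t) (α' / α t) φ' (μ' / μ t) u) x) s t := by
  have hfactor := hasDerivWithinAt_cexp_mul_mul hα.ofReal_comp hφ.ofReal_comp hμ.ofReal_comp
    (Complex.ofReal_ne_zero.mpr hα₀) (Complex.ofReal_ne_zero.mpr hμ₀)
  have hprofile := hasDerivWithinAt_comp_mul_const_sub hu.hasDerivAt ha hμ
  have hvelocity : μ' / μ t * (μ t * (x - a t)) = μ' * (x - a t) := by field_simp
  refine (hfactor.mul hprofile).congr_deriv ?_
  simp only [gact, lieAct_apply_of_differentiableAt _ _ _ _ hu, hvelocity,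
    Complex.real_smul, Complex.ofReal_div]
  ring

/-- `d/dt (g(t)·u) = g(t)·(Y(t)u)` where
`Y(t) = a'μ e₁ + (α'/α) e₂ + φ' e₃ + (μ'/μ) e₄`. -/
theorem statement4
    (I : Set ℝ) (hI : I.OrdConnected)
    (a α φ μ a' α' φ' μ' : ℝ → ℝ)
    (ha : ∀ t ∈ I, HasDerivWithinAt a (a' t) I t)
    (hα : ∀ t ∈ I, HasDerivWithinAt α (α' t) I t)
    (hφ : ∀ t ∈ I, HasDerivWithinAt φ (φ' t) I t)
    (hμ : ∀ t ∈ I, HasDerivWithinAt μ (μ' t) I t)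
    (hca : ContinuousOn a' I) (hcα : ContinuousOn α' I)
    (hcφ : ContinuousOn φ' I) (hcμ : ContinuousOn μ' I)
    (hαpos : ∀ t ∈ I, 0 < α t) (hμpos : ∀ t ∈ I, 0 < μ t)
    (u : ℝ → ℂ) (hu : ContDiff ℝ 1 u) :
    ∀ t ∈ I, ∀ x : ℝ,
      HasDerivWithinAt (fun s : ℝ => gact (a s) (α s) (φ s) (μ s) u x)
        (gact (a t) (α t) (φ t) (μ t)
          (fun y => ((a' t * μ t : ℝ) : ℂ) * e1 u y + ((α' t / α t : ℝ) : ℂ) * e2 u y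
            + ((φ' t : ℝ) : ℂ) * e3 u y + ((μ' t / μ t : ℝ) : ℂ) * e4 u y) x)
        I t := by
  intro t ht x
  exact statement4_general (ha t ht) (hα t ht) (hφ t ht) (hμ t ht) (hαpos t ht).ne' (hμpos t ht).ne'
    (hu.differentiable one_ne_zero _)
end
end

section
/- Let η(x) = 1/(x+i) and set e₁·η = −η′, e₂·η = η, e₃·η = iη, e₄·η = (xη)′. Then the values ω(e_i·η, e_j·η) = Im ∫_ℝ (e_i·η)(x) conj((e_j·η)(x)) dx are: ω(e₁·η, e₂·η) = −π/2, ω(e₁·η, e₃·η) = 0, ω(e₁·η, e₄·η) = −π/2, ω(e₂·η, e₃·η) = −π, ω(e₂·η, e₄·η) = 0, ω(e₃·η, e₄·η) = π/2. -/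
open MeasureTheory Filter

noncomputable section

/-- `η(x) = 1/(x+i)`. -/
def eta (x : ℝ) : ℂ := 1 / (x + Complex.I)

/-- The symplectic form `ω(u,v) = Im ∫ u conj(v)`. -/
def symp (u v : ℝ → ℂ) : ℝ := (∫ x : ℝ, u x * (starRingEnd ℂ) (v x)).im

/-! `η' = -η²` and `xη = 1 - iη` give `e₁·η = η²` and `e₄·η = iη²`, so every value of `ω` is, up to
sign, the real or imaginary part of some `⟨η ^ m, η ^ n⟩` with `m, n ∈ {1, 2}`. These follow from
`⟨η, η⟩ = ∫ (1 + x²)⁻¹ = π` and `∫ η² = 0` through the partial fraction `η η̄ = (i/2)(η - η̄)`,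
which, multiplied by `η ^ m η̄ ^ n`, lowers the exponents. -/

open Bornology
open scoped ComplexConjugate

/-- The `L²` Hermitian product `⟨u, v⟩ = ∫ u conj(v)`, linear in the first argument, whose imaginary
part is `symp`. -/
def hermitianForm (u v : ℝ → ℂ) : ℂ := ∫ x : ℝ, u x * conj (v x)

lemma symp_eq_im_hermitianForm (u v : ℝ → ℂ) : symp u v = (hermitianForm u v).im := rfl

lemma conj_hermitianForm (u v : ℝ → ℂ) : conj (hermitianForm u v) = hermitianForm v u := by
  simp only [hermitianForm, ← integral_conj, map_mul, Complex.conj_conj, mul_comm]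

lemma hermitianForm_e3_left (u v : ℝ → ℂ) :
    hermitianForm (e3 u) v = Complex.I * hermitianForm u v := by
  simp only [hermitianForm, e3, mul_assoc, integral_const_mul]

lemma hermitianForm_e3_right (u v : ℝ → ℂ) :
    hermitianForm u (e3 v) = -Complex.I * hermitianForm u v := by
  simp only [hermitianForm, e3, map_mul, Complex.conj_I, mul_left_comm _ (-Complex.I),
    integral_const_mul]

lemma ofReal_add_I_ne_zero (x : ℝ) : (x : ℂ) + Complex.I ≠ 0 :=
  fun h => by simpa using congrArg Complex.im h

lemma ofReal_mul_eta (x : ℝ) : x * eta x = 1 - Complex.I * eta x := by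
  have hx := ofReal_add_I_ne_zero x
  rw [eta]
  field_simp
  ring

lemma eta_mul_conj_eta (x : ℝ) : eta x * conj (eta x) = ((1 + x ^ 2)⁻¹ : ℝ) := by
  have h : Complex.normSq (x + Complex.I) = 1 + x ^ 2 := by
    simpa [add_comm] using Complex.normSq_add_mul_I x 1
  rw [Complex.mul_conj, eta, one_div, Complex.normSq_inv, h]

lemma eta_mul_conj_eta_eq_sub (x : ℝ) :
    eta x * conj (eta x) = Complex.I / 2 * (eta x - conj (eta x)) := by
  have h := ofReal_mul_eta x
  have h' := congrArg conj h
  simp only [map_mul, map_sub, map_one, Complex.conj_ofReal, Complex.conj_I] at h'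
  linear_combination Complex.I / 2 * (eta x * h' - conj (eta x) * h) +
    eta x * conj (eta x) * Complex.I_sq

lemma norm_eta_sq (x : ℝ) : ‖eta x‖ ^ 2 = (1 + x ^ 2)⁻¹ := by
  exact_mod_cast (Complex.mul_conj' (eta x)).symm.trans (eta_mul_conj_eta x)

lemma norm_eta_le_one (x : ℝ) : ‖eta x‖ ≤ 1 := by
  rw [← sq_le_one_iff₀ (norm_nonneg _), norm_eta_sq]
  exact inv_le_one_of_one_le₀ (by nlinarith [sq_nonneg x])

lemma hasDerivAt_eta (x : ℝ) : HasDerivAt eta (-eta x ^ 2) x := by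
  have h := ((hasDerivAt_id x).ofReal_comp.add_const Complex.I).inv (ofReal_add_I_ne_zero x)
  have heta : eta = (fun y : ℝ => (y : ℂ) + Complex.I)⁻¹ := funext fun y => one_div _
  simpa [heta, neg_div] using h

@[fun_prop]
lemma continuous_eta : Continuous eta :=
  continuous_iff_continuousAt.2 fun x => (hasDerivAt_eta x).continuousAt

lemma e1_eta : e1 eta = eta ^ 2 :=
  funext fun x => by simp [e1, (hasDerivAt_eta x).deriv]

lemma e4_eta : e4 eta = e3 (eta ^ 2) := by
  funext x
  have h : (fun y : ℝ => (y : ℂ) * eta y) = fun y => 1 - Complex.I * eta y :=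
    funext ofReal_mul_eta
  simp only [e4, h]
  simpa [e3] using (((hasDerivAt_eta x).const_mul Complex.I).const_sub 1).deriv

lemma integrable_eta_pow_mul_conj_eta_pow {m n : ℕ} (h : 2 ≤ m + n) :
    Integrable fun x => eta x ^ m * conj (eta x ^ n) := by
  refine integrable_inv_one_add_sq.mono' ?_ (Eventually.of_forall fun x => ?_)
  · exact Continuous.aestronglyMeasurable (by fun_prop)
  · calc ‖eta x ^ m * conj (eta x ^ n)‖ = ‖eta x‖ ^ (m + n) := by
          rw [norm_mul, RCLike.norm_conj, norm_pow, norm_pow, pow_add]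
      _ ≤ ‖eta x‖ ^ 2 := pow_le_pow_of_le_one (norm_nonneg _) (norm_eta_le_one x) h
      _ = (1 + x ^ 2)⁻¹ := norm_eta_sq x

lemma hermitianForm_eta_pow_succ_succ {m n : ℕ} (h : 1 ≤ m + n) :
    hermitianForm (eta ^ (m + 1)) (eta ^ (n + 1)) =
      Complex.I / 2 *
        (hermitianForm (eta ^ (m + 1)) (eta ^ n) - hermitianForm (eta ^ m) (eta ^ (n + 1))) := by
  simp only [hermitianForm, Pi.pow_apply]
  rw [← integral_sub (integrable_eta_pow_mul_conj_eta_pow (by lia))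
    (integrable_eta_pow_mul_conj_eta_pow (by lia)), ← integral_const_mul]
  congr 1 with x
  simp only [map_pow]
  linear_combination eta x ^ m * conj (eta x) ^ n * eta_mul_conj_eta_eq_sub x

lemma hermitianForm_eta_eta : hermitianForm eta eta = Real.pi := by
  simp only [hermitianForm, eta_mul_conj_eta]
  rw [integral_complex_ofReal, integral_univ_inv_one_add_sq]

lemma tendsto_eta_cobounded : Tendsto eta (cobounded ℝ) (nhds 0) := by
  have h : Tendsto (fun x : ℝ => (x : ℂ) + Complex.I) (cobounded ℝ) (cobounded ℂ) :=
    (tendsto_add_const_cobounded _).comp (RCLike.tendsto_ofReal_cobounded_cobounded ℂ)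
  exact (tendsto_inv₀_cobounded.comp h).congr fun x => (one_div _).symm

lemma integral_eta_pow_add_two (n : ℕ) : ∫ x, eta x ^ (n + 2) = 0 := by
  have hderiv (x : ℝ) :
      HasDerivAt (fun y => -(eta y ^ (n + 1) / (n + 1))) (eta x ^ (n + 2)) x := by
    have hn : (n : ℂ) + 1 ≠ 0 := n.cast_add_one_ne_zero
    refine (((hasDerivAt_eta x).pow (n + 1)).div_const (n + 1 : ℂ)).neg.congr_deriv ?_
    push_cast
    field_simp
    rw [← pow_add]
  have hlim : Tendsto (fun y => -(eta y ^ (n + 1) / (n + 1))) (cobounded ℝ) (nhds 0) := by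
    simpa using ((tendsto_eta_cobounded.pow (n + 1)).div_const (n + 1 : ℂ)).neg
  have hint : Integrable fun x => eta x ^ (n + 2) := by
    simpa using integrable_eta_pow_mul_conj_eta_pow (m := n + 2) (n := 0) (by lia)
  rw [integral_of_hasDerivAt_of_tendsto hderiv hint
    (hlim.mono_left IsOrderBornology.atBot_le_cobounded)
    (hlim.mono_left IsOrderBornology.atTop_le_cobounded), sub_zero]

lemma hermitianForm_eta_pow_add_two_one (n : ℕ) : hermitianForm (eta ^ (n + 2)) 1 = 0 := by
  simpa [hermitianForm] using integral_eta_pow_add_two n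

lemma hermitianForm_eta_sq_eta : hermitianForm (eta ^ 2) eta = -(Real.pi / 2) * Complex.I := by
  have h_one : hermitianForm (eta ^ 2) 1 = 0 := hermitianForm_eta_pow_add_two_one 0
  have h := hermitianForm_eta_pow_succ_succ (m := 1) (n := 0) (by norm_num)
  simp only [zero_add, one_add_one_eq_two, pow_one, pow_zero, hermitianForm_eta_eta, h_one] at h
  rw [h]
  ring

lemma hermitianForm_eta_eta_sq : hermitianForm eta (eta ^ 2) = Real.pi / 2 * Complex.I := by
  rw [← conj_hermitianForm, hermitianForm_eta_sq_eta]
  simp [Complex.conj_ofNat]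

lemma hermitianForm_eta_sq_eta_sq : hermitianForm (eta ^ 2) (eta ^ 2) = Real.pi / 2 := by
  have h := hermitianForm_eta_pow_succ_succ (m := 1) (n := 1) (by norm_num)
  simp only [one_add_one_eq_two, pow_one, hermitianForm_eta_sq_eta, hermitianForm_eta_eta_sq] at h
  rw [h]
  linear_combination -(Real.pi / 2 : ℂ) * Complex.I_sq

/-- the values of the symplectic form on the tangent vectors
`e_j·η` at `η`. -/
theorem statement6 :
    symp (e1 eta) (e2 eta) = -(Real.pi / 2) ∧
    symp (e1 eta) (e3 eta) = 0 ∧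
    symp (e1 eta) (e4 eta) = -(Real.pi / 2) ∧
    symp (e2 eta) (e3 eta) = -Real.pi ∧
    symp (e2 eta) (e4 eta) = 0 ∧
    symp (e3 eta) (e4 eta) = Real.pi / 2 := by
  have e2_eta : e2 eta = eta := rfl
  rw [e1_eta, e2_eta, e4_eta]
  simp [symp_eq_im_hermitianForm, hermitianForm_e3_left, hermitianForm_e3_right,
    hermitianForm_eta_eta, hermitianForm_eta_sq_eta, hermitianForm_eta_eta_sq,
    hermitianForm_eta_sq_eta_sq]
end
end

section
/- Fix α, μ > 0 and define the alternating bilinear form Ω on ℝ⁴ by Ω(V, X) = (π/2) α²μ [ (μ/α)(V₂X₁ − V₁X₂) + (V₄X₁ − V₁X₄) + (2/α)(V₃X₂ − V₂X₃) + (1/μ)(V₃X₄ − V₄X₃) ]. Then for any f_a, f_α, f_φ, f_μ ∈ ℝ, the vector X ∈ ℝ⁴ with components X₁ = −(2/(α²μ²π))(−2μ f_μ + α f_α), X₂ = (2/(α²μ²π))(α f_a + αμ f_φ), X₃ = (2/(α²μπ))(μ f_μ − α f_α), X₄ = −(2/(α²μπ))(μ f_φ + 2 f_a) is the unique vector satisfying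 Ω(V, X) = f_a V₁ + f_α V₂ + f_φ V₃ + f_μ V₄ for all V ∈ ℝ⁴; in particular Ω is non-degenerate. -/
/-!
If every linear functional is of the form `Ω(·, X)`, then a vector `Y` with `Ω(Y, ·) = 0` is
killed by all functionals, hence zero. So for the alternating form `Ω`, the explicit Hamiltonian
vector of each covector already implies non-degeneracy, and with it uniqueness; the linear system
for `X` never has to be solved.
-/

open Real

noncomputable section

/-- The restriction of the symplectic form to the manifold of solitons, in the
coordinates `(a, α, φ, μ)`, as an alternating bilinear form on `ℝ⁴`. -/
def Omeg (α μ : ℝ) (V X : Fin 4 → ℝ) : ℝ :=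
  Real.pi / 2 * α ^ 2 * μ *
    ((μ / α) * (V 1 * X 0 - V 0 * X 1) + (V 3 * X 0 - V 0 * X 3)
      + (2 / α) * (V 2 * X 1 - V 1 * X 2) + (1 / μ) * (V 2 * X 3 - V 3 * X 2))

/-- The Hamiltonian vector field of a function with partial derivatives
`(f_a, f_α, f_φ, f_μ)` with respect to `Omeg`. -/
def hamVF (α μ fa fα fφ fμ : ℝ) : Fin 4 → ℝ :=
  ![ -(2 / (α ^ 2 * μ ^ 2 * Real.pi)) * (-(2 * μ * fμ) + α * fα),
     (2 / (α ^ 2 * μ ^ 2 * Real.pi)) * (α * fa + α * μ * fφ),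
     (2 / (α ^ 2 * μ * Real.pi)) * (μ * fμ - α * fα),
     -(2 / (α ^ 2 * μ * Real.pi)) * (μ * fφ + 2 * fa) ]

theorem separatingLeft_of_flip_surjective {R M N : Type*} [CommSemiring R]
    [AddCommMonoid M] [Module R M] [Module.Projective R M] [AddCommMonoid N] [Module R N]
    {B : M →ₗ[R] N →ₗ[R] R} (hB : Function.Surjective B.flip) : B.SeparatingLeft := by
  intro y hy
  refine (Module.forall_dual_apply_eq_zero_iff R y).mp fun ℓ => ?_
  obtain ⟨x, rfl⟩ := hB ℓ
  exact hy x

/-- The symplectic form `Omeg`, bundled as a bilinear form. The covector `Ω(·, X)` that defines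
Hamiltonian vectors puts `X` in the second slot, so it is `(omegForm α μ).flip X`. -/
def omegForm (α μ : ℝ) : LinearMap.BilinForm ℝ (Fin 4 → ℝ) :=
  LinearMap.mk₂ ℝ (Omeg α μ)
    (fun V W X => by simp only [Omeg, Pi.add_apply]; ring)
    (fun c V X => by simp only [Omeg, Pi.smul_apply, smul_eq_mul]; ring)
    (fun V X Y => by simp only [Omeg, Pi.add_apply]; ring)
    (fun c V X => by simp only [Omeg, Pi.smul_apply, smul_eq_mul]; ring)

theorem omegForm_isAlt (α μ : ℝ) : (omegForm α μ).IsAlt := by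
  intro V
  simp only [omegForm, LinearMap.mk₂_apply, Omeg]
  ring

theorem omeg_hamVF {α μ : ℝ} (hα : α ≠ 0) (hμ : μ ≠ 0) (fa fα fφ fμ : ℝ)
    (V : Fin 4 → ℝ) :
    Omeg α μ V (hamVF α μ fa fα fφ fμ) = fa * V 0 + fα * V 1 + fφ * V 2 + fμ * V 3 := by
  simp only [Omeg, hamVF, Matrix.cons_val]
  field_simp
  ring

theorem omegForm_flip_surjective {α μ : ℝ} (hα : α ≠ 0) (hμ : μ ≠ 0) :
    Function.Surjective (omegForm α μ).flip := by
  intro ℓ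
  obtain ⟨f, rfl⟩ := (dotProductEquiv ℝ (Fin 4)).surjective ℓ
  refine ⟨hamVF α μ (f 0) (f 1) (f 2) (f 3), LinearMap.ext fun V => ?_⟩
  calc Omeg α μ V (hamVF α μ (f 0) (f 1) (f 2) (f 3))
      = f 0 * V 0 + f 1 * V 1 + f 2 * V 2 + f 3 * V 3 := omeg_hamVF hα hμ ..
    _ = f ⬝ᵥ V := (Fin.sum_univ_four fun i => f i * V i).symm

theorem omegForm_nondegenerate {α μ : ℝ} (hα : α ≠ 0) (hμ : μ ≠ 0) :
    (omegForm α μ).Nondegenerate :=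
  (omegForm_isAlt α μ).isRefl.nondegenerate_iff_separatingLeft.mpr
    (separatingLeft_of_flip_surjective (omegForm_flip_surjective hα hμ))

theorem omegForm_flip_injective {α μ : ℝ} (hα : α ≠ 0) (hμ : μ ≠ 0) :
    Function.Injective (omegForm α μ).flip :=
  LinearMap.ker_eq_bot.mp <|
    LinearMap.separatingRight_iff_flip_ker_eq_bot.mp (omegForm_nondegenerate hα hμ).2

/-- `hamVF` is the unique vector `X` with `Ω(V,X) = df(V)` for all
`V`; in particular `Ω` is non-degenerate. -/
theorem statement8 (α μ : ℝ) (hα : 0 < α) (hμ : 0 < μ) (fa fα fφ fμ : ℝ) :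
    (∀ V : Fin 4 → ℝ, Omeg α μ V (hamVF α μ fa fα fφ fμ)
        = fa * V 0 + fα * V 1 + fφ * V 2 + fμ * V 3) ∧
    (∀ X : Fin 4 → ℝ,
        (∀ V : Fin 4 → ℝ, Omeg α μ V X = fa * V 0 + fα * V 1 + fφ * V 2 + fμ * V 3) →
        X = hamVF α μ fa fα fφ fμ) ∧
    (∀ X : Fin 4 → ℝ, (∀ V : Fin 4 → ℝ, Omeg α μ V X = 0) → X = 0) := by
  have hamVF_spec := omeg_hamVF hα.ne' hμ.ne' fa fα fφ fμ
  refine ⟨hamVF_spec, fun X hX => ?_, (omegForm_nondegenerate hα.ne' hμ.ne').2⟩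
  refine omegForm_flip_injective hα.ne' hμ.ne' (LinearMap.ext fun V => ?_)
  exact (hX V).trans (hamVF_spec V).symm
end
end
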